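/- (Discrete Gohberg lemma.) Let n ≥ 1 and let m : ℤⁿ × ℝⁿ → ℂ be such that for every k ∈ ℤⁿ the function ξ ↦ m(k,ξ) is smooth and ℤⁿ-periodic, and suppose that for all multi-indices α, β there are constants C_{α,β} with |Δ_k^α ∂_ξ^β m(k,ξ)| ≤ C_{α,β} for all k ∈ ℤⁿ and ξ ∈ ℝⁿ (in particular the pseudo-differential operator t_m f(k) = ∫_{[0,1]ⁿ} e^{2πi k·ξ} m(k,ξ) (𝓕 f)(ξ) dξ extends to a bounded operator on ℓ²(ℤⁿ)). Then the bounded extension of t_m is a compact operator on ℓ²(ℤⁿ) if and only if limsup_{|k|→∞} sup_{ξ∈[0,1]ⁿ} |m(k,ξ)| = 0, i.e., for every ε > 0 there is R such that sup_{ξ} |m(k,ξ)| ≤ ε whenever |k| ≥ R. -/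

import Mathlib

/-!
The matrix of `t_m` in the standard basis is `K(k, j) = a_k(j - k)`, where `a_k(l)` is the `l`-th
Fourier coefficient of `m(k, ·)` (`discretePdo_single`). Integrating by parts, the uniform bounds on
the `ξ`-derivatives give `|a_k(l)| ≤ G(l)` with `G(l) = C ∏ᵢ (1 + lᵢ²)⁻¹` summable and independent
of `k` (`exists_cubeCoeff_majorant`). By dominated convergence, `a_k(l) → 0` as `|k| → ∞` for each
`l` is therefore equivalent to `Σ_l |a_k(l)| → 0`.

If `T` is compact, the image of the unit ball is relatively compact, so the `k`-th coordinates of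
its elements tend to zero uniformly; as `a_k(l)` is the `k`-th coordinate of `T e_{k+l}`, it tends
to zero (`tendsto_diagonal_of_isCompactOperator`), and
`sup_ξ |m(k, ξ)| ≤ Σ_l |a_k(l)| → 0` by Fourier inversion on the torus
(`SmoothPeriodic.norm_le_tsum`).

Conversely, `|a_k(l)| ≤ sup_ξ |m(k, ξ)|`, so if the symbol tends to zero then so do the absolute row
sums of the matrix of `T`, whose absolute column sums are bounded by `Σ G`. By Schur's test `T` is
the norm limit of its truncations to finitely many rows, which have finite rank
(`isCompactOperator_of_row_sums`).
-/

open MeasureTheory Real ENNReal NNReal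

/-- Iterated application of a family of operators according to a multi-index:
`multiOp op α = (op 1)^{α 1} ∘ ⋯ ∘ (op n)^{α n}`. -/
def multiOp {n : ℕ} {F : Type*} (op : Fin n → F → F) (α : Fin n → ℕ) : F → F :=
  (List.ofFn fun i => (op i)^[α i]).foldr (· ∘ ·) id

/-- Partial derivative in the `i`-th coordinate of a function on `ℝⁿ`. -/
noncomputable def pdR {n : ℕ} (i : Fin n) (g : (Fin n → ℝ) → ℂ) : (Fin n → ℝ) → ℂ :=
  fun ξ => deriv (fun t => g (Function.update ξ i t)) (ξ i)

/-- Partial difference operator in the `i`-th coordinate of a function on `ℤⁿ`: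
`Δ_{k_i} g (k) = g(k + e_i) - g(k)`. -/
def diffOp {n : ℕ} (i : Fin n) (g : (Fin n → ℤ) → ℂ) : (Fin n → ℤ) → ℂ :=
  fun k => g (Function.update k i (k i + 1)) - g k

/-- The discrete pseudo-differential operator on `ℤⁿ` with symbol `m`:
`t_m f (k) = ∫_{[0,1]ⁿ} e^{2πi k·ξ} m(k,ξ) (𝓕 f)(ξ) dξ`, where
`(𝓕 f)(ξ) = Σ_{j ∈ ℤⁿ} e^{-2πi j·ξ} f(j)`. -/
noncomputable def discretePdo (n : ℕ) (m : (Fin n → ℤ) → (Fin n → ℝ) → ℂ)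
    (f : (Fin n → ℤ) → ℂ) : (Fin n → ℤ) → ℂ :=
  fun k => ∫ ξ in Set.Icc (0 : Fin n → ℝ) 1,
    Complex.exp (2 * π * Complex.I * (∑ i, (k i : ℝ) * ξ i)) * m k ξ *
      ∑' j : Fin n → ℤ, Complex.exp (-(2 * π * Complex.I * (∑ i, (j i : ℝ) * ξ i))) * f j

/-! ### Fourier coefficients of smooth periodic functions -/

/-- The `l`-th Fourier coefficient of `g` over the unit cube:
`∫_{[0,1]ⁿ} e^{-2πi l·ξ} g(ξ) dξ`. -/
noncomputable def cubeCoeff {n : ℕ} (g : (Fin n → ℝ) → ℂ) (l : Fin n → ℤ) : ℂ :=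
  ∫ ξ in Set.Icc (0 : Fin n → ℝ) 1,
    Complex.exp (-(2 * π * Complex.I * (∑ i, (l i : ℂ) * (ξ i : ℂ)))) * g ξ

/-- `g` is smooth and `ℤⁿ`-periodic. -/
def SmoothPeriodic {n : ℕ} (g : (Fin n → ℝ) → ℂ) : Prop :=
  ContDiff ℝ (⊤ : ℕ∞) g ∧
    ∀ (ξ : Fin n → ℝ) (j : Fin n → ℤ), g (ξ + fun i => (j i : ℝ)) = g ξ

lemma pdR_eq_fderiv {n : ℕ} (i : Fin n) {g : (Fin n → ℝ) → ℂ} (hg : ContDiff ℝ (⊤ : ℕ∞) g)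
    (ξ : Fin n → ℝ) : pdR i g ξ = fderiv ℝ g ξ (Pi.single i 1) := by
  have h1 : HasFDerivAt g (fderiv ℝ g ξ) (Function.update ξ i (ξ i)) := by
    rw [Function.update_eq_self]
    exact (hg.differentiable (by simp) ξ).hasFDerivAt
  exact (h1.comp_hasDerivAt (ξ i) (hasDerivAt_update ξ i (ξ i))).deriv

lemma SmoothPeriodic.pdR {n : ℕ} {g : (Fin n → ℝ) → ℂ} (hg : SmoothPeriodic g) (i : Fin n) :
    SmoothPeriodic (pdR i g) := by
  have h : _root_.pdR i g = fun ξ => fderiv ℝ g ξ (Pi.single i 1) :=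
    funext (pdR_eq_fderiv i hg.1)
  refine ⟨?_, fun ξ j => ?_⟩
  · rw [h]
    exact (hg.1.fderiv_right (by simp)).clm_apply contDiff_const
  · simp only [h]
    rw [← fderiv_comp_add_right]
    simp only [hg.2]

/-- The integral of a partial derivative over the unit cube vanishes when the values on the two
opposite faces agree. -/
lemma integral_fderiv_single_eq_zero {n : ℕ} (i : Fin n) {F : (Fin n → ℝ) → ℂ}
    (hF : ContDiff ℝ 1 F) (hp : ∀ ξ, F (ξ + Pi.single i 1) = F ξ) :
    ∫ ξ in Set.Icc (0 : Fin n → ℝ) 1, fderiv ℝ F ξ (Pi.single i 1) = 0 := by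
  obtain _ | n := n
  · exact i.elim0
  have hd : Continuous fun ξ => fderiv ℝ F ξ (Pi.single i 1) :=
    (hF.continuous_fderiv (by simp)).clm_apply continuous_const
  have hsum : ∀ x : Fin (n + 1) → ℝ,
      ∑ j, (if j = i then fderiv ℝ F x else 0) (Pi.single j 1) =
        fderiv ℝ F x (Pi.single i 1) := fun x => by
    rw [Finset.sum_eq_single i (fun j _ hj => by simp [hj]) (by simp)]
    simp
  have key := integral_divergence_of_hasFDerivAt_off_countable' (0 : Fin (n + 1) → ℝ) 1
    zero_le_one (fun j => if j = i then F else 0)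
    (fun j x => if j = i then fderiv ℝ F x else 0) ∅ Set.countable_empty
    (fun j => by
      split_ifs
      · exact hF.continuous.continuousOn
      · exact continuousOn_const)
    (fun x _ j => by
      split_ifs
      · exact (hF.differentiable (by simp) x).hasFDerivAt
      · exact hasFDerivAt_const 0 x)
    (by
      simp only [hsum]
      exact hd.continuousOn.integrableOn_compact isCompact_Icc)
  simp only [hsum] at key
  rw [key]
  refine Finset.sum_eq_zero fun j _ => ?_
  by_cases hj : j = i
  · subst hj
    have hface : ∀ x : Fin n → ℝ,
        F (j.insertNth ((1 : Fin (n + 1) → ℝ) j) x) =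
          F (j.insertNth ((0 : Fin (n + 1) → ℝ) j) x) := fun x => by
      rw [← hp (j.insertNth ((0 : Fin (n + 1) → ℝ) j) x)]
      congr 1
      ext r
      rcases Fin.eq_self_or_eq_succAbove j r with rfl | ⟨r, rfl⟩ <;> simp
    simp only [if_true, hface, sub_self]
  · simp [hj]

/-- Integration by parts: differentiating in direction `i` multiplies the Fourier coefficient by
`2πi lᵢ`. -/
lemma cubeCoeff_pdR {n : ℕ} {g : (Fin n → ℝ) → ℂ} (hg : SmoothPeriodic g) (i : Fin n)
    (l : Fin n → ℤ) : cubeCoeff (pdR i g) l = 2 * π * Complex.I * l i * cubeCoeff g l := by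
  set L : (Fin n → ℝ) →L[ℝ] ℂ := ∑ r, (-(2 * π * Complex.I * (l r : ℂ))) •
    (Complex.ofRealCLM.comp (ContinuousLinearMap.proj (R := ℝ) (φ := fun _ : Fin n => ℝ) r))
    with hL
  have hLa : ∀ ξ, L ξ = -(2 * π * Complex.I * (∑ r, (l r : ℂ) * (ξ r : ℂ))) := fun ξ => by
    simp [hL, Finset.mul_sum, mul_assoc]
  have hLi : L (Pi.single i 1) = -(2 * π * Complex.I * l i) := by
    rw [hLa, Finset.sum_eq_single i (fun j _ hj => by simp [hj]) (by simp)]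
    simp
  have hE : ∀ ξ, HasFDerivAt (fun ξ => Complex.exp (L ξ)) (Complex.exp (L ξ) • L) ξ :=
    fun ξ => L.hasFDerivAt.cexp
  have hEc : ContDiff ℝ 1 (fun ξ => Complex.exp (L ξ)) := L.contDiff.cexp
  have hg1 : ContDiff ℝ 1 g := hg.1.of_le (by simp)
  have hF := integral_fderiv_single_eq_zero i (F := fun ξ => Complex.exp (L ξ) * g ξ)
    (hEc.mul hg1) (fun ξ => by
      have h2 : g (ξ + Pi.single i 1) = g ξ := by
        rw [← hg.2 ξ (Pi.single i 1)]
        congr 2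
        ext r
        by_cases hr : r = i
        · subst hr; simp
        · simp [hr]
      rw [h2, map_add, hLi, Complex.exp_add]
      congr 1
      have : Complex.exp (-(2 * π * Complex.I * l i)) = 1 := by
        rw [Complex.exp_eq_one_iff]
        exact ⟨-l i, by push_cast; ring⟩
      rw [this, mul_one])
  have hder : ∀ ξ, fderiv ℝ (fun ξ => Complex.exp (L ξ) * g ξ) ξ (Pi.single i 1) =
      Complex.exp (L ξ) * pdR i g ξ - 2 * π * Complex.I * l i * (Complex.exp (L ξ) * g ξ) :=
    fun ξ => by
      have := ((hE ξ).mul (hg1.differentiable (by simp) ξ).hasFDerivAt).fderiv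
      rw [pdR_eq_fderiv i hg.1]
      change fderiv ℝ ((fun ξ => Complex.exp (L ξ)) * g) ξ (Pi.single i 1) = _
      rw [this]
      simp [hLi]
      ring
  simp only [hder] at hF
  have hEcont : Continuous fun ξ => Complex.exp (L ξ) := hEc.continuous
  rw [integral_sub, integral_const_mul, sub_eq_zero] at hF
  · simpa only [cubeCoeff, ← hLa] using hF
  · exact (hEcont.mul (hg.pdR i).1.continuous).continuousOn.integrableOn_compact isCompact_Icc
  · exact (continuous_const.mul
      (hEcont.mul hg.1.continuous)).continuousOn.integrableOn_compact isCompact_Icc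

lemma cubeCoeff_norm_le {n : ℕ} {g : (Fin n → ℝ) → ℂ} {C : ℝ}
    (hC : ∀ ξ ∈ Set.Icc (0 : Fin n → ℝ) 1, ‖g ξ‖ ≤ C) (l : Fin n → ℤ) : ‖cubeCoeff g l‖ ≤ C := by
  have hv : (volume : Measure (Fin n → ℝ)).real (Set.Icc 0 1) = 1 := by
    simp [Measure.real, Real.volume_Icc_pi]
  refine (norm_setIntegral_le_of_norm_le_const (C := C) (by simp [Real.volume_Icc_pi])
    fun ξ hξ => ?_).trans_eq (by rw [hv, mul_one])
  have : -(2 * π * Complex.I * (∑ i, (l i : ℂ) * (ξ i : ℂ))) =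
      ((-(2 * π * ∑ i, (l i : ℝ) * ξ i) : ℝ) : ℂ) * Complex.I := by push_cast; ring
  rw [norm_mul, this, Complex.norm_exp_ofReal_mul_I, one_mul]
  exact hC ξ hξ

lemma multiOp_zero {n : ℕ} {F : Type*} (op : Fin n → F → F) : multiOp op 0 = id := by
  have : ∀ k : ℕ, (List.replicate k (id : F → F)).foldr (· ∘ ·) id = id := fun k => by
    induction k with
    | zero => rfl
    | succ k ih => simp [List.replicate_succ, ih]
  simp [multiOp, List.ofFn_const, this]

/-- If each operator preserves the class `P` and multiplies the functional `φ` by a scalar on it,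
then their composition preserves `P` and multiplies `φ` by the product of the scalars. -/
lemma foldr_ofFn_scalar {n : ℕ} {F : Type*} (P : F → Prop) (φ : F → ℂ) (f : Fin n → F → F)
    (c : Fin n → ℂ) (hf : ∀ i g, P g → P (f i g) ∧ φ (f i g) = c i * φ g) {g : F} (hg : P g) :
    P ((List.ofFn f).foldr (· ∘ ·) id g) ∧
      φ ((List.ofFn f).foldr (· ∘ ·) id g) = (∏ i, c i) * φ g := by
  induction n with
  | zero => simpa using hg
  | succ n ih =>
    rw [List.ofFn_succ, List.foldr_cons, Fin.prod_univ_succ]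
    obtain ⟨h1, h2⟩ := ih (fun i => f i.succ) (fun i => c i.succ) (fun i => hf i.succ)
    obtain ⟨h3, h4⟩ := hf 0 _ h1
    exact ⟨h3, by rw [Function.comp_apply, h4, h2, mul_assoc]⟩

lemma cubeCoeff_multiOp {n : ℕ} {g : (Fin n → ℝ) → ℂ} (hg : SmoothPeriodic g) (β : Fin n → ℕ)
    (l : Fin n → ℤ) :
    cubeCoeff (multiOp pdR β g) l = (∏ i, (2 * π * Complex.I * l i) ^ β i) * cubeCoeff g l := by
  refine (foldr_ofFn_scalar SmoothPeriodic (fun g => cubeCoeff g l) _ _ (fun i g hg => ?_) hg).2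
  generalize β i = b
  induction b with
  | zero => simpa using hg
  | succ b ih =>
    rw [Function.iterate_succ_apply']
    exact ⟨ih.1.pdR i, by rw [cubeCoeff_pdR ih.1, ih.2, pow_succ]; ring⟩

lemma summable_prod_inv_one_add_sq (n : ℕ) :
    Summable fun l : Fin n → ℤ => ∏ i, (1 + (l i : ℝ) ^ 2)⁻¹ := by
  have h1 : Summable fun l : ℤ => (1 + (l : ℝ) ^ 2)⁻¹ := by
    refine Summable.of_norm_bounded_eventually
      (Real.summable_one_div_int_pow.2 (one_lt_two : 1 < 2)) ?_
    filter_upwards [(Set.finite_singleton (0 : ℤ)).compl_mem_cofinite] with l hl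
    have hl' : (0 : ℝ) < (l : ℝ) ^ 2 := by
      have : (l : ℝ) ≠ 0 := by exact_mod_cast hl
      positivity
    rw [Real.norm_of_nonneg (by positivity), one_div]
    exact inv_anti₀ hl' (by linarith)
  induction n with
  | zero => exact (hasSum_fintype _).summable
  | succ n ih =>
    rw [← (Fin.consEquiv fun _ : Fin (n + 1) => ℤ).summable_iff]
    refine (h1.mul_of_nonneg ih (fun _ => by positivity) (fun _ => by positivity)).congr
      fun x => ?_
    simp [Fin.prod_univ_succ, Fin.consEquiv, mul_comm]

/-- Uniform bounds on all `ξ`-derivatives give a summable majorant of the Fourier coefficients. -/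
lemma exists_cubeCoeff_majorant {n : ℕ} {κ : Type*} {m : κ → (Fin n → ℝ) → ℂ}
    (hm : ∀ k, SmoothPeriodic (m k))
    (hb : ∀ β : Fin n → ℕ, ∃ C : ℝ, ∀ k ξ, ‖multiOp pdR β (m k) ξ‖ ≤ C) :
    ∃ G : (Fin n → ℤ) → ℝ, Summable G ∧ ∀ k l, ‖cubeCoeff (m k) l‖ ≤ G l := by
  classical
  choose C hC using hb
  -- The derivatives of order two in the directions of `s` and zero in the other ones suffice,
  -- since `∏ᵢ (1 + lᵢ²)` is the sum over `s` of `∏_{i ∈ s} lᵢ²`.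
  let β : Finset (Fin n) → Fin n → ℕ := fun s i => if i ∈ s then 2 else 0
  refine ⟨fun l => (∑ s : Finset (Fin n), C (β s)) * ∏ i, (1 + (l i : ℝ) ^ 2)⁻¹,
    (summable_prod_inv_one_add_sq n).mul_left _, fun k l => ?_⟩
  dsimp only
  rw [Finset.prod_inv_distrib, ← div_eq_mul_inv, le_div_iff₀ (by positivity), Finset.prod_one_add,
    Finset.mul_sum, Finset.powerset_univ]
  refine Finset.sum_le_sum fun s _ => ?_
  have h := cubeCoeff_norm_le (fun ξ _ => hC (β s) k ξ) l
  rw [cubeCoeff_multiOp (hm k), norm_mul, mul_comm] at h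
  refine le_trans (mul_le_mul_of_nonneg_left ?_ (norm_nonneg _)) h
  rw [norm_prod, ← Finset.prod_subset (Finset.subset_univ s) (fun i _ hi => by simp [β, hi])]
  refine Finset.prod_le_prod (fun i _ => by positivity) fun i hi => ?_
  have hpi : (1 : ℝ) ≤ (2 * π) ^ 2 := one_le_pow₀ (by linarith [Real.pi_gt_three])
  simp only [β, hi, if_true, norm_pow, norm_mul, Complex.norm_I, Complex.norm_intCast,
    Complex.norm_real, Complex.norm_ofNat, mul_one, Real.norm_of_nonneg Real.pi_pos.le]
  rw [mul_pow, sq_abs]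
  nlinarith [sq_nonneg (l i : ℝ)]

/-- A smooth periodic function descends to the torus, and its Fourier coefficients there are the
`cubeCoeff`s; an absolutely summable Fourier series then bounds the function. -/
lemma SmoothPeriodic.norm_le_tsum {n : ℕ} {g : (Fin n → ℝ) → ℂ} (hg : SmoothPeriodic g)
    (hs : Summable fun l => ‖cubeCoeff g l‖) (ξ : Fin n → ℝ) :
    ‖g ξ‖ ≤ ∑' l, ‖cubeCoeff g l‖ := by
  have hq : IsOpenQuotientMap
      (Pi.map fun (_ : Fin n) (x : ℝ) => (x : UnitAddCircle)) :=
    IsOpenQuotientMap.piMap fun _ => QuotientAddGroup.isOpenQuotientMap_mk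
  have hfac : Function.FactorsThrough (⟨g, hg.1.continuous⟩ : C(Fin n → ℝ, ℂ))
      (⟨_, hq.continuous⟩ : C(Fin n → ℝ, UnitAddTorus (Fin n))) := fun a b hab => by
    have h1 : ∀ i, ∃ z : ℤ, b i = a i + z := fun i => by
      have h2 : ((a i : ℝ) : UnitAddCircle) = (b i : ℝ) := congrFun hab i
      obtain ⟨z, hz⟩ := AddSubgroup.mem_zmultiples_iff.1 (QuotientAddGroup.eq.1 h2)
      refine ⟨z, ?_⟩
      simp only [zsmul_eq_mul, mul_one] at hz
      linarith
    choose z hz using h1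
    change g a = g b
    rw [show b = a + fun i => (z i : ℝ) from funext hz, hg.2]
  let f : C(UnitAddTorus (Fin n), ℂ) := Topology.IsQuotientMap.lift
    (f := ⟨_, hq.continuous⟩) hq.isQuotientMap ⟨g, hg.1.continuous⟩ hfac
  have hf : ∀ x : Fin n → ℝ, f (fun i => (x i : UnitAddCircle)) = g x := fun x =>
    congrArg (fun h : C(Fin n → ℝ, ℂ) => h x) (Topology.IsQuotientMap.lift_comp
      (f := ⟨_, hq.continuous⟩) hq.isQuotientMap ⟨g, hg.1.continuous⟩ hfac)
  have hcoeff : ∀ l, UnitAddTorus.mFourierCoeff f l = cubeCoeff g l := fun l => by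
    rw [UnitAddTorus.mFourierCoeff_eq_integral f l 0, cubeCoeff]
    have hset : {x : Fin n → ℝ | ∀ i, x i ∈ Set.Ioc ((0 : Fin n → ℝ) i) ((0 : Fin n → ℝ) i + 1)}
        =ᵐ[volume] Set.Icc (0 : Fin n → ℝ) 1 := by
      have h1 : {x : Fin n → ℝ | ∀ i, x i ∈ Set.Ioc ((0 : Fin n → ℝ) i) ((0 : Fin n → ℝ) i + 1)}
          = Set.univ.pi fun i => Set.Ioc ((0 : Fin n → ℝ) i) ((1 : Fin n → ℝ) i) := by
        ext x
        simp
      rw [h1]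
      exact Measure.univ_pi_Ioc_ae_eq_Icc
    rw [setIntegral_congr_set hset]
    congr 1
    ext x
    rw [hf, smul_eq_mul]
    congr 1
    simp only [UnitAddTorus.mFourier, ContinuousMap.coe_mk, fourier_coe_apply, ← Complex.exp_sum]
    congr 1
    rw [Finset.mul_sum, ← Finset.sum_neg_distrib]
    refine Finset.sum_congr rfl fun i _ => ?_
    simp
    ring
  have hsum := UnitAddTorus.hasSum_mFourier_series_apply_of_summable (f := f)
    (by rw [funext hcoeff]; exact hs.of_norm) (fun i => (ξ i : UnitAddCircle))
  rw [hf] at hsum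
  have hle : ∀ l, ‖UnitAddTorus.mFourierCoeff f l •
      UnitAddTorus.mFourier l (fun i => (ξ i : UnitAddCircle))‖ ≤ ‖cubeCoeff g l‖ := fun l => by
    rw [norm_smul, hcoeff]
    refine mul_le_of_le_one_right (norm_nonneg _) ?_
    exact (ContinuousMap.norm_coe_le_norm _ _).trans_eq UnitAddTorus.mFourier_norm
  rw [← hsum.tsum_eq]
  exact tsum_of_norm_bounded hs.hasSum hle

/-! ### Compactness of matrix operators on `ℓ²` -/

/-- Along the cofinite filter, the coordinates of the points of a compact subset of `ℓ²` are
uniformly small: each of the finitely many centres of an `ε / 2`-net is a null family. -/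
lemma eventually_norm_apply_le_of_isCompact {ι : Type*} {S : Set (lp (fun _ : ι => ℂ) 2)}
    (hS : IsCompact S) {ε : ℝ} (hε : 0 < ε) :
    ∀ᶠ k in Filter.cofinite, ∀ v ∈ S, ‖(v : ι → ℂ) k‖ ≤ ε := by
  obtain ⟨t, -, ht, hcov⟩ := hS.finite_cover_balls (half_pos hε)
  have hnull : ∀ v : lp (fun _ : ι => ℂ) 2, ∀ᶠ k in Filter.cofinite, ‖(v : ι → ℂ) k‖ ≤ ε / 2 :=
    fun v => by
    have h1 := ((lp.memℓp v).summable (by simp)).tendsto_cofinite_zero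
    filter_upwards [h1.eventually_lt_const (show (0 : ℝ) < (ε / 2) ^ 2 by positivity)] with k hk
    refine le_of_lt (lt_of_pow_lt_pow_left₀ 2 (by positivity) ?_)
    simpa using hk
  filter_upwards [(Filter.eventually_all_finite ht).2 fun v _ => hnull v] with k hk v hv
  obtain ⟨w, hw, hvw⟩ := Set.mem_iUnion₂.1 (hcov hv)
  have h2 : ‖(v : ι → ℂ) k - (w : ι → ℂ) k‖ ≤ ε / 2 := by
    refine le_trans ?_ (mem_ball_iff_norm.1 hvw).le
    exact lp.norm_apply_le_norm two_ne_zero (v - w) k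
  calc ‖(v : ι → ℂ) k‖ = ‖((v : ι → ℂ) k - (w : ι → ℂ) k) + (w : ι → ℂ) k‖ := by simp
    _ ≤ ε / 2 + ε / 2 := norm_add_le_of_le h2 (hk w hw)
    _ = ε := add_halves ε

/-- The entries of a compact operator on `ℓ²` tend to zero along any fixed diagonal. -/
lemma tendsto_diagonal_of_isCompactOperator {ι : Type*} [AddGroup ι] [DecidableEq ι]
    {T : lp (fun _ : ι => ℂ) 2 →L[ℂ] lp (fun _ : ι => ℂ) 2} (hT : IsCompactOperator T)
    {a : ι → ι → ℂ} (ha : ∀ k j, (T (lp.single 2 j 1) : ι → ℂ) k = a k (j - k)) (l : ι) :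
    Filter.Tendsto (fun k => a k l) Filter.cofinite (nhds 0) := by
  obtain ⟨S, hS, hsub⟩ := IsCompactOperator.image_closedBall_subset_compact
    (f := (T : lp (fun _ : ι => ℂ) 2 →ₗ[ℂ] lp (fun _ : ι => ℂ) 2)) hT 1
  rw [Metric.tendsto_nhds]
  intro ε hε
  filter_upwards [eventually_norm_apply_le_of_isCompact hS (half_pos hε)] with k hk
  have h1 := hk (T (lp.single 2 (l + k) 1)) (hsub ⟨_, by simp, rfl⟩)
  rw [ha, add_sub_cancel_right] at h1
  rw [dist_zero_right]
  linarith

/-- Schur's test, for finite truncations. -/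
lemma schur_finset {ι : Type*} (K : ι → ι → ℂ) (f : ι → ℂ) {δ B : ℝ} (s t : Finset ι)
    (hδ : 0 ≤ δ)
    (hrow : ∀ k ∈ s, ∑ j ∈ t, ‖K k j‖ ≤ δ) (hcol : ∀ j, ∑ k ∈ s, ‖K k j‖ ≤ B) :
    ∑ k ∈ s, ‖∑ j ∈ t, K k j * f j‖ ^ 2 ≤ δ * (B * ∑ j ∈ t, ‖f j‖ ^ 2) := by
  calc ∑ k ∈ s, ‖∑ j ∈ t, K k j * f j‖ ^ 2
      ≤ ∑ k ∈ s, δ * ∑ j ∈ t, ‖K k j‖ * ‖f j‖ ^ 2 := by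
        refine Finset.sum_le_sum fun k hk => ?_
        calc ‖∑ j ∈ t, K k j * f j‖ ^ 2 ≤ (∑ j ∈ t, ‖K k j‖ * ‖f j‖) ^ 2 := by
              gcongr
              exact norm_sum_le_of_le _ fun j _ => (norm_mul _ _).le
          _ ≤ (∑ j ∈ t, ‖K k j‖) * ∑ j ∈ t, ‖K k j‖ * ‖f j‖ ^ 2 :=
              Finset.sum_sq_le_sum_mul_sum_of_sq_le_mul _ (fun j _ => norm_nonneg _)
                (fun j _ => by positivity) fun j _ => le_of_eq (by ring)
          _ ≤ _ := by
              gcongr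
              exact hrow k hk
    _ = δ * ∑ j ∈ t, (∑ k ∈ s, ‖K k j‖) * ‖f j‖ ^ 2 := by
        rw [← Finset.mul_sum, Finset.sum_comm]
        simp only [Finset.sum_mul]
    _ ≤ _ := by
        rw [Finset.mul_sum t _ B]
        gcongr with j _
        exact hcol j

/-- An operator on `ℓ²` whose matrix is dominated by a summable convolution kernel is compact as
soon as its absolute row sums tend to zero: deleting all but finitely many rows of the matrix leaves
an operator which is small by Schur's test. -/
lemma isCompactOperator_of_row_sums {ι : Type*} [AddCommGroup ι] [DecidableEq ι]
    {T : lp (fun _ : ι => ℂ) 2 →L[ℂ] lp (fun _ : ι => ℂ) 2}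
    {a : ι → ι → ℂ} (ha : ∀ k j, (T (lp.single 2 j 1) : ι → ℂ) k = a k (j - k))
    {G : ι → ℝ} (hG : Summable G) (haG : ∀ k l, ‖a k l‖ ≤ G l)
    (hrow : Filter.Tendsto (fun k => ∑' l, ‖a k l‖) Filter.cofinite (nhds 0)) :
    IsCompactOperator T := by
  have hG0 : ∀ l, 0 ≤ G l := fun l => (norm_nonneg _).trans (haG 0 l)
  have hsa : ∀ k, Summable fun l => ‖a k l‖ := fun k =>
    Summable.of_nonneg_of_le (fun _ => norm_nonneg _) (haG k) hG
  have hcol : ∀ (s : Finset ι) (j : ι), ∑ k ∈ s, ‖a k (j - k)‖ ≤ ∑' l, G l := fun s j => by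
    have h1 : Summable fun k => G (j - k) := (Equiv.subLeft j).summable_iff.2 hG
    rw [← (Equiv.subLeft j).tsum_eq G]
    exact (Finset.sum_le_sum fun k _ => haG k _).trans (h1.sum_le_tsum s fun k _ => hG0 _)
  have hrowle : ∀ (k : ι) (t : Finset ι), ∑ j ∈ t, ‖a k (j - k)‖ ≤ ∑' l, ‖a k l‖ := fun k t => by
    have h1 : Summable fun j => ‖a k (j - k)‖ := (Equiv.subRight k).summable_iff.2 (hsa k)
    rw [← (Equiv.subRight k).tsum_eq fun l => ‖a k l‖]
    exact h1.sum_le_tsum t fun k _ => norm_nonneg _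
  have hT : ∀ (f : lp (fun _ : ι => ℂ) 2) (k : ι),
      HasSum (fun j => a k (j - k) * (f : ι → ℂ) j) ((T f : ι → ℂ) k) := fun f k => by
    have h1 := (lp.hasSum_single (p := 2) (by simp) f).mapL
      ((lp.evalCLM ℂ (fun _ : ι => ℂ) 2 k).comp T)
    convert! h1 using 2 with j
    have h2 : lp.single (E := fun _ : ι => ℂ) 2 j ((f : ι → ℂ) j) =
        ((f : ι → ℂ) j) • lp.single (E := fun _ : ι => ℂ) 2 j 1 := by
      rw [← lp.single_smul, smul_eq_mul, mul_one]
    rw [h2, map_smul, smul_eq_mul, mul_comm, ← ha]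
    rfl
  -- the row truncations of `T`
  let P : Finset ι → lp (fun _ : ι => ℂ) 2 →L[ℂ] lp (fun _ : ι => ℂ) 2 := fun s =>
    ∑ k ∈ s, (lp.singleContinuousLinearMap ℂ (fun _ : ι => ℂ) 2 k).comp
      ((lp.evalCLM ℂ (fun _ : ι => ℂ) 2 k).comp T)
  have hPa : ∀ s f k, ((P s) f : ι → ℂ) k = if k ∈ s then (T f : ι → ℂ) k else 0 := by
    intro s f k
    simp only [P, _root_.sum_apply, lp.coeFn_sum, Finset.sum_apply]
    simp [lp.single_apply, Pi.single_apply, lp.evalCLM]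
  have hPc : ∀ s, IsCompactOperator (P s) := fun s => by
    simp only [P]
    induction s using Finset.induction_on with
    | empty => simpa using isCompactOperator_zero
    | insert k s hk ih =>
      rw [Finset.sum_insert hk]
      refine IsCompactOperator.add ?_ ih
      have h1 : IsCompactOperator ((lp.evalCLM ℂ (fun _ : ι => ℂ) 2 k).comp T) :=
        isCompactOperator_of_locallyCompactSpace_dom _
      exact h1.clm_comp (lp.singleContinuousLinearMap ℂ (fun _ : ι => ℂ) 2 k)
  have hPT : Filter.Tendsto P Filter.atTop (nhds T) := by
    rw [Metric.tendsto_nhds]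
    intro ε hε
    set B := ∑' l, G l
    have hB : 0 ≤ B := tsum_nonneg hG0
    -- this makes `δ * B ≤ (ε / 2) ^ 2`
    obtain ⟨δ, hδ0, hδB⟩ : ∃ δ : ℝ, 0 < δ ∧ δ * B ≤ (ε / 2) ^ 2 :=
      ⟨(ε / 2) ^ 2 / (B + 1), by positivity, by
        rw [div_mul_eq_mul_div, div_le_iff₀ (by positivity)]
        gcongr
        linarith⟩
    have hfin : {k | ¬ ∑' l, ‖a k l‖ < δ}.Finite := hrow.eventually_lt_const hδ0
    filter_upwards [Filter.eventually_ge_atTop hfin.toFinset] with s hs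
    refine lt_of_le_of_lt ?_ (half_lt_self hε)
    rw [dist_comm, dist_eq_norm]
    refine ContinuousLinearMap.opNorm_le_bound _ (by positivity) fun f => ?_
    refine lp.norm_le_of_forall_sum_le (by simp) (by positivity) fun u => ?_
    have hlim : Filter.Tendsto (fun t : Finset ι => ∑ k ∈ u.filter (· ∉ s),
        ‖∑ j ∈ t, a k (j - k) * (f : ι → ℂ) j‖ ^ 2) Filter.atTop
        (nhds (∑ k ∈ u.filter (· ∉ s), ‖(T f : ι → ℂ) k‖ ^ 2)) :=
      tendsto_finsetSum _ fun k _ => ((hT f k).norm.pow 2)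
    have hle := le_of_tendsto' hlim (b := (ε / 2 * ‖f‖) ^ 2) fun t => by
      have h1 := schur_finset (fun k j => a k (j - k)) (f : ι → ℂ) (u.filter (· ∉ s)) t hδ0.le
        (fun k hk => (hrowle k t).trans (by
          by_contra hcon
          exact (Finset.mem_filter.1 hk).2
            (hs (hfin.mem_toFinset.2 fun h => hcon h.le)))) (hcol _)
      have h2 : ∑ j ∈ t, ‖(f : ι → ℂ) j‖ ^ 2 ≤ ‖f‖ ^ 2 := by
        simpa using lp.sum_rpow_le_norm_rpow (p := 2) (by simp) f t
      calc _ ≤ _ := h1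
        _ ≤ δ * (B * ‖f‖ ^ 2) := by gcongr
        _ = δ * B * ‖f‖ ^ 2 := by ring
        _ ≤ (ε / 2) ^ 2 * ‖f‖ ^ 2 := by gcongr
        _ = _ := by ring
    have hsimp : ∀ k, ‖((T - P s) f : ι → ℂ) k‖ ^ 2 =
        if k ∉ s then ‖(T f : ι → ℂ) k‖ ^ 2 else 0 := fun k => by
      rw [_root_.sub_apply, lp.coeFn_sub, Pi.sub_apply, hPa]
      by_cases hk : k ∈ s
      · rw [if_pos hk, if_neg (not_not.2 hk), sub_self, norm_zero, zero_pow two_ne_zero]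
      · rw [if_neg hk, if_pos hk, sub_zero]
    simp only [ENNReal.toReal_ofNat, Real.rpow_ofNat]
    simp only [hsimp, ← Finset.sum_filter]
    exact hle
  exact isCompactOperator_of_tendsto hPT (Filter.Eventually.of_forall hPc)

/-! ### The pseudo-differential operator -/

/-- The matrix of `t_m` is given by the Fourier coefficients of the symbol. -/
lemma discretePdo_single {n : ℕ} (m : (Fin n → ℤ) → (Fin n → ℝ) → ℂ) (j k : Fin n → ℤ) :
    discretePdo n m (Pi.single j 1) k = cubeCoeff (m k) (j - k) := by
  unfold discretePdo cubeCoeff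
  congr 1
  ext ξ
  rw [tsum_eq_single j (fun i hi => by simp [hi]), Pi.single_eq_same, mul_one, mul_right_comm,
    ← Complex.exp_add]
  congr 2
  simp only [Pi.sub_apply, Int.cast_sub, sub_mul, Finset.sum_sub_distrib]
  push_cast
  ring

/-- `|k| → ∞` is convergence along the cofinite filter of `ℤⁿ`. -/
lemma exists_forall_norm_ge_iff_cofinite {n : ℕ} (p : (Fin n → ℤ) → Prop) :
    (∃ R : ℝ, ∀ k : Fin n → ℤ, R ≤ Real.sqrt (∑ i, ((k i : ℝ)) ^ 2) → p k) ↔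
      ∀ᶠ k in Filter.cofinite, p k := by
  constructor
  · rintro ⟨R, hR⟩
    refine (Set.finite_Icc (fun _ : Fin n => -⌈R⌉) (fun _ => ⌈R⌉)).subset fun k hk => ?_
    have hlt : Real.sqrt (∑ i, ((k i : ℝ)) ^ 2) < R := lt_of_not_ge fun h => hk (hR k h)
    have hi : ∀ i, |k i| ≤ ⌈R⌉ := fun i => by
      have h1 : |(k i : ℝ)| ≤ Real.sqrt (∑ i, ((k i : ℝ)) ^ 2) := by
        rw [← Real.sqrt_sq_eq_abs]
        exact Real.sqrt_le_sqrt
          (Finset.single_le_sum (f := fun i => (k i : ℝ) ^ 2) (fun i _ => sq_nonneg _)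
            (Finset.mem_univ i))
      have h2 : (|k i| : ℝ) ≤ ⌈R⌉ := h1.trans (hlt.le.trans (Int.le_ceil R))
      exact_mod_cast h2
    exact ⟨fun i => (abs_le.1 (hi i)).1, fun i => (abs_le.1 (hi i)).2⟩
  · intro h
    obtain ⟨R, hR⟩ := (Set.Finite.image (fun k : Fin n → ℤ => Real.sqrt (∑ i, ((k i : ℝ)) ^ 2))
      (Filter.eventually_cofinite.1 h)).bddAbove
    refine ⟨R + 1, fun k hk => ?_⟩
    by_contra hcon
    have := hR ⟨k, hcon, rfl⟩
    linarith

/-- Discrete Gohberg lemma: let `m : ℤⁿ × ℝⁿ → ℂ` be a symbol, smooth and `ℤⁿ`-periodic in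
`ξ`, with `|Δ_k^α ∂_ξ^β m(k,ξ)| ≤ C_{α,β}` for all multi-indices `α, β` (so that `t_m`
extends to a bounded operator on `ℓ²(ℤⁿ)`). Then any bounded extension `T` of `t_m` to
`ℓ²(ℤⁿ)` is a compact operator if and only if
`limsup_{|k|→∞} sup_{ξ ∈ [0,1]ⁿ} |m(k,ξ)| = 0`. -/
theorem discrete_gohberg_lemma (n : ℕ) (hn : 1 ≤ n)
    (m : (Fin n → ℤ) → (Fin n → ℝ) → ℂ)
    (hsmooth : ∀ k, ContDiff ℝ (⊤ : ℕ∞) (m k))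
    (hper : ∀ (k : Fin n → ℤ) (ξ : Fin n → ℝ) (j : Fin n → ℤ),
      m k (ξ + fun i => (j i : ℝ)) = m k ξ)
    (hsym : ∀ α β : Fin n → ℕ, ∃ C : ℝ, ∀ (k : Fin n → ℤ) (ξ : Fin n → ℝ),
      ‖multiOp diffOp α (fun k' : Fin n → ℤ => multiOp pdR β (m k') ξ) k‖ ≤ C)
    (T : lp (fun _ : (Fin n → ℤ) => ℂ) 2 →L[ℂ] lp (fun _ : (Fin n → ℤ) => ℂ) 2)
    (hext : ∀ g : lp (fun _ : (Fin n → ℤ) => ℂ) 2,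
      (Function.support (g : (Fin n → ℤ) → ℂ)).Finite →
      ∀ k, (T g : (Fin n → ℤ) → ℂ) k = discretePdo n m (g : (Fin n → ℤ) → ℂ) k) :
    IsCompactOperator T ↔
      ∀ ε : ℝ, 0 < ε → ∃ R : ℝ, ∀ k : Fin n → ℤ,
        R ≤ Real.sqrt (∑ i, ((k i : ℝ)) ^ 2) →
        ∀ ξ ∈ Set.Icc (0 : Fin n → ℝ) 1, ‖m k ξ‖ ≤ ε := by
  classical
  have hm : ∀ k, SmoothPeriodic (m k) := fun k => ⟨hsmooth k, hper k⟩
  obtain ⟨G, hG, hmG⟩ := exists_cubeCoeff_majorant hm (fun β => by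
    obtain ⟨C, hC⟩ := hsym 0 β
    exact ⟨C, fun k ξ => by simpa [multiOp_zero] using hC k ξ⟩)
  have hT : ∀ k j, (T (lp.single 2 j 1) : (Fin n → ℤ) → ℂ) k = cubeCoeff (m k) (j - k) :=
    fun k j => by
    rw [hext _ ((Set.finite_singleton j).subset fun i hi => by
      by_contra hij
      exact hi (lp.single_apply_ne 2 j _ hij)), lp.coeFn_single, discretePdo_single]
  have hs : ∀ k, Summable fun l => ‖cubeCoeff (m k) l‖ := fun k =>
    Summable.of_nonneg_of_le (fun _ => norm_nonneg _) (hmG k) hG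
  -- By the majorant `G`, coefficientwise decay in `k` upgrades to decay of the `ℓ¹` norms.
  have hdom : (∀ l, Filter.Tendsto (fun k => cubeCoeff (m k) l) Filter.cofinite (nhds 0)) →
      Filter.Tendsto (fun k => ∑' l, ‖cubeCoeff (m k) l‖) Filter.cofinite (nhds 0) := fun h => by
    have := tendsto_tsum_of_dominated_convergence (f := fun k l => ‖cubeCoeff (m k) l‖)
      (g := fun _ => (0 : ℝ)) (𝓕 := Filter.cofinite) hG
      (fun l => by simpa using (h l).norm)
      (Filter.Eventually.of_forall fun k l => by simpa using hmG k l)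
    simpa using this
  simp only [exists_forall_norm_ge_iff_cofinite]
  constructor
  · intro hc ε hε
    have h0 := hdom fun l => tendsto_diagonal_of_isCompactOperator hc hT l
    filter_upwards [h0.eventually_le_const hε] with k hk ξ _
    exact ((hm k).norm_le_tsum (hs k) ξ).trans hk
  · intro h
    refine isCompactOperator_of_row_sums hT hG hmG (hdom fun l => ?_)
    rw [Metric.tendsto_nhds]
    intro ε hε
    filter_upwards [h (ε / 2) (half_pos hε)] with k hk
    rw [dist_zero_right]
    exact (cubeCoeff_norm_le hk l).trans_lt (half_lt_self hε)
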